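/- Let p be a prime and let Λ = U ⊕ U(p) ⊕ ⋯ ⊕ U(p) (one copy of U and g−1 copies of U(p), orthogonal direct sum). Then the assignment v ↦ [v*] induces a bijection from the set of Γ_Λ-equivalence classes of primitive vectors of Λ onto the discriminant group D_Λ. -/

import Mathlib

noncomputable section

open Submodule

variable {V : Type} [AddCommGroup V] [Module ℚ V]

/-- The dual lattice `Λ^∨ = {v ∈ Λ⊗ℚ : (v, Λ) ⊆ ℤ}` of a lattice `L` (inside the
ambient rational vector space `V = Λ⊗ℚ`) with respect to the form `B`. -/
def dualLattice (B : V →ₗ[ℚ] V →ₗ[ℚ] ℚ) (L : Submodule ℤ V) : Submodule ℤ V where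
  carrier := {v : V | ∀ x ∈ L, ∃ n : ℤ, B v x = (n : ℚ)}
  zero_mem' := fun x _ => ⟨0, by simp⟩
  add_mem' := by
    intro a b ha hb x hx
    obtain ⟨n, hn⟩ := ha x hx
    obtain ⟨m, hm⟩ := hb x hx
    exact ⟨n + m, by rw [map_add, LinearMap.add_apply, hn, hm]; push_cast; ring⟩
  smul_mem' := by
    intro c a ha x hx
    obtain ⟨n, hn⟩ := ha x hx
    refine ⟨c * n, ?_⟩
    have h1 : B (c • a) x = (B.flip x) (c • a) := rfl
    rw [h1, map_zsmul, LinearMap.flip_apply, hn, zsmul_eq_mul]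
    push_cast; ring

/-- A vector `v` is primitive in the lattice `L` if `ℚv ∩ L = ℤv`. -/
def IsPrimitive (L : Submodule ℤ V) (v : V) : Prop :=
  v ∈ L ∧ (Submodule.span ℚ {v}).restrictScalars ℤ ⊓ L = Submodule.span ℤ {v}

/-- `div(v) = d`, i.e. the ideal `(v, L) ⊆ ℤ` is generated by the positive integer `d`. -/
def HasDiv (B : V →ₗ[ℚ] V →ₗ[ℚ] ℚ) (L : Submodule ℤ V) (v : V) (d : ℕ) : Prop :=
  0 < d ∧ (∀ x ∈ L, ∃ n : ℤ, B v x = (n : ℚ) * (d : ℚ)) ∧ (∃ x ∈ L, B v x = (d : ℚ))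

/-- `v* = v / div(v)`. -/
def vstar (v : V) (d : ℕ) : V := ((d : ℚ))⁻¹ • v

lemma vstar_mem {B : V →ₗ[ℚ] V →ₗ[ℚ] ℚ} {L : Submodule ℤ V} {v : V} {d : ℕ}
    (h : HasDiv B L v d) : vstar v d ∈ dualLattice B L := by
  intro x hx
  obtain ⟨n, hn⟩ := h.2.1 x hx
  refine ⟨n, ?_⟩
  have hd : (d : ℚ) ≠ 0 := Nat.cast_ne_zero.mpr h.1.ne'
  show B (((d : ℚ))⁻¹ • v) x = (n : ℚ)
  rw [map_smul, LinearMap.smul_apply, hn, smul_eq_mul]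
  field_simp

/-- The discriminant group `D_Λ = Λ^∨ / Λ`. -/
abbrev DiscGroup (B : V →ₗ[ℚ] V →ₗ[ℚ] ℚ) (L : Submodule ℤ V) :=
  dualLattice B L ⧸ (L.comap (dualLattice B L).subtype)

/-- The class of an element of the dual lattice in the discriminant group. -/
def discCls (B : V →ₗ[ℚ] V →ₗ[ℚ] ℚ) (L : Submodule ℤ V) (v : dualLattice B L) :
    DiscGroup B L := Submodule.Quotient.mk v

/-- `γ` is an isometry of the lattice `L`, i.e. an element of `Sp(Λ)` (viewed as a
rational linear automorphism of the ambient space preserving `L` and the form). -/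
def IsIsometry (B : V →ₗ[ℚ] V →ₗ[ℚ] ℚ) (L : Submodule ℤ V) (γ : V ≃ₗ[ℚ] V) : Prop :=
  (∀ v, v ∈ L ↔ γ v ∈ L) ∧ ∀ v w, B (γ v) (γ w) = B v w

/-- `γ` lies in `Γ_Λ`: it is an isometry of `L` acting trivially on the discriminant
group, i.e. `γ(v) ≡ v mod Λ` for every `v ∈ Λ^∨`. -/
def InGamma (B : V →ₗ[ℚ] V →ₗ[ℚ] ℚ) (L : Submodule ℤ V) (γ : V ≃ₗ[ℚ] V) : Prop :=
  IsIsometry B L γ ∧ ∀ v ∈ dualLattice B L, γ v - v ∈ L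

lemma isometry_dual_mem {B : V →ₗ[ℚ] V →ₗ[ℚ] ℚ} {L : Submodule ℤ V} {γ : V ≃ₗ[ℚ] V}
    (h : IsIsometry B L γ) {u : V} (hu : u ∈ dualLattice B L) :
    γ u ∈ dualLattice B L := by
  intro x hx
  have hx' : γ.symm x ∈ L := by
    rw [h.1 (γ.symm x), LinearEquiv.apply_symm_apply]
    exact hx
  obtain ⟨n, hn⟩ := hu (γ.symm x) hx'
  refine ⟨n, ?_⟩
  have := h.2 u (γ.symm x)
  rw [LinearEquiv.apply_symm_apply] at this
  rw [this, hn]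

/-- The transvection `T_{l,m} : v ↦ v + (l,v)m + (m,v)l` on the rational vector space. -/
def transvection (B : V →ₗ[ℚ] V →ₗ[ℚ] ℚ) (l m : V) : V →ₗ[ℚ] V :=
  LinearMap.id + (B l).smulRight m + (B m).smulRight l

/-- An orthogonal decomposition `Λ = U ⊕ Λ'` with `U` a hyperbolic plane spanned by
`e, f` with `(e,f) = 1`. -/
def OrthoDecompU (B : V →ₗ[ℚ] V →ₗ[ℚ] ℚ) (L : Submodule ℤ V)
    (e f : V) (L' : Submodule ℤ V) : Prop :=
  e ∈ L ∧ f ∈ L ∧ L' ≤ L ∧ B e f = 1 ∧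
  (∀ z ∈ L', B e z = 0 ∧ B f z = 0) ∧
  Submodule.span ℤ {e, f} ⊔ L' = L

/-- An orthogonal decomposition `Λ = U₁ ⊕ U₂ ⊕ Λ''` with `U₁, U₂` hyperbolic planes. -/
def OrthoDecompUU (B : V →ₗ[ℚ] V →ₗ[ℚ] ℚ) (L : Submodule ℤ V)
    (e₁ f₁ e₂ f₂ : V) (L'' : Submodule ℤ V) : Prop :=
  e₁ ∈ L ∧ f₁ ∈ L ∧ e₂ ∈ L ∧ f₂ ∈ L ∧ L'' ≤ L ∧
  B e₁ f₁ = 1 ∧ B e₂ f₂ = 1 ∧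
  B e₁ e₂ = 0 ∧ B e₁ f₂ = 0 ∧ B f₁ e₂ = 0 ∧ B f₁ f₂ = 0 ∧
  (∀ z ∈ L'', B e₁ z = 0 ∧ B f₁ z = 0 ∧ B e₂ z = 0 ∧ B f₂ z = 0) ∧
  Submodule.span ℤ {e₁, f₁} ⊔ Submodule.span ℤ {e₂, f₂} ⊔ L'' = L

/-- An orthogonal decomposition `Λ = U ⊕ U(p) ⊕ ⋯ ⊕ U(p)`. -/
def OrthoDecompUUp (B : V →ₗ[ℚ] V →ₗ[ℚ] ℚ) (L : Submodule ℤ V) (p : ℕ)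
    (e f : V) {ι : Type} (E F : ι → V) : Prop :=
  e ∈ L ∧ f ∈ L ∧ (∀ i, E i ∈ L) ∧ (∀ i, F i ∈ L) ∧
  B e f = 1 ∧ (∀ i, B (E i) (F i) = (p : ℚ)) ∧
  (∀ i, B e (E i) = 0 ∧ B e (F i) = 0 ∧ B f (E i) = 0 ∧ B f (F i) = 0) ∧
  (∀ i j, i ≠ j → B (E i) (E j) = 0 ∧ B (E i) (F j) = 0 ∧ B (F i) (F j) = 0) ∧
  Submodule.span ℤ ({e, f} ∪ Set.range E ∪ Set.range F) = L

/-- An orthogonal decomposition `Λ = U(d₁) ⊕ ⋯ ⊕ U(d_g)`. -/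
def OrthoDecompType (B : V →ₗ[ℚ] V →ₗ[ℚ] ℚ) (L : Submodule ℤ V) {g : ℕ}
    (d : Fin g → ℕ) (E F : Fin g → V) : Prop :=
  (∀ i, E i ∈ L) ∧ (∀ i, F i ∈ L) ∧
  (∀ i, B (E i) (F i) = (d i : ℚ)) ∧
  (∀ i j, i ≠ j → B (E i) (E j) = 0 ∧ B (E i) (F j) = 0 ∧ B (F i) (F j) = 0) ∧
  Submodule.span ℤ (Set.range E ∪ Set.range F) = L

lemma coe_int_addCircle (n : ℤ) : (((n : ℚ) : AddCircle (1 : ℚ))) = 0 := by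
  have hmem : ((n : ℚ)) ∈ AddSubgroup.zmultiples (1 : ℚ) := ⟨n, by simp⟩
  exact (QuotientAddGroup.eq_zero_iff _).mpr hmem

lemma bilin_antisymm (B : V →ₗ[ℚ] V →ₗ[ℚ] ℚ) (halt : ∀ v, B v v = 0) (a b : V) :
    B a b = - B b a := by
  have h := halt (a + b)
  simp only [map_add, LinearMap.add_apply] at h
  rw [halt a, halt b] at h
  linarith

/-- The `ℚ/ℤ`-valued pairing on the dual lattice. -/
def rationalPairing (B : V →ₗ[ℚ] V →ₗ[ℚ] ℚ) (L : Submodule ℤ V) :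
    dualLattice B L →ₗ[ℤ] dualLattice B L →ₗ[ℤ] AddCircle (1 : ℚ) :=
  LinearMap.mk₂ ℤ (fun v w => ((B v.1 w.1 : ℚ) : AddCircle (1 : ℚ)))
    (fun v v' w => by
      beta_reduce
      rw [Submodule.coe_add, map_add, LinearMap.add_apply]
      exact QuotientAddGroup.mk_add (AddSubgroup.zmultiples (1 : ℚ)) _ _)
    (fun c v w => by
      beta_reduce
      have h1 : B ((c • v : dualLattice B L) : V) (w : V)
          = c • (B (v : V) (w : V)) := by
        have h2 : B ((c • v : dualLattice B L) : V) (w : V)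
            = (B.flip (w : V)) ((c • v : dualLattice B L) : V) := rfl
        rw [h2, Submodule.coe_smul, map_zsmul, LinearMap.flip_apply]
      rw [h1]
      exact QuotientAddGroup.mk_zsmul (AddSubgroup.zmultiples (1 : ℚ)) _ _
    )
    (fun v w w' => by
      beta_reduce
      rw [Submodule.coe_add, map_add]
      exact QuotientAddGroup.mk_add (AddSubgroup.zmultiples (1 : ℚ)) _ _)
    (fun c v w => by
      beta_reduce
      rw [Submodule.coe_smul, map_zsmul]
      exact QuotientAddGroup.mk_zsmul (AddSubgroup.zmultiples (1 : ℚ)) _ _)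

/-- The discriminant form on `D_Λ`, with values in `ℚ/ℤ`. -/
def discForm (B : V →ₗ[ℚ] V →ₗ[ℚ] ℚ) (L : Submodule ℤ V) (halt : ∀ v, B v v = 0) :
    DiscGroup B L →ₗ[ℤ] DiscGroup B L →ₗ[ℤ] AddCircle (1 : ℚ) :=
  (Submodule.liftQ _
    ((Submodule.liftQ _ (rationalPairing B L) (by
      intro v hv
      rw [LinearMap.mem_ker]
      refine LinearMap.ext fun w => ?_
      have hv' : (v : V) ∈ L := hv
      obtain ⟨n, hn⟩ := w.2 (v : V) hv'
      show ((B (v : V) (w : V) : ℚ) : AddCircle (1 : ℚ)) = 0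
      have h3 : B (v : V) (w : V) = ((-n : ℤ) : ℚ) := by
        rw [bilin_antisymm B halt, hn]; push_cast; ring
      rw [h3]
      exact coe_int_addCircle _)).flip) (by
      intro w hw
      rw [LinearMap.mem_ker]
      refine LinearMap.ext fun x => ?_
      obtain ⟨v, rfl⟩ := Submodule.Quotient.mk_surjective _ x
      have hw' : (w : V) ∈ L := hw
      obtain ⟨n, hn⟩ := v.2 (w : V) hw'
      show ((B (v : V) (w : V) : ℚ) : AddCircle (1 : ℚ)) = 0
      rw [hn]
      exact coe_int_addCircle _)).flip

/-- The orthogonal complement of a subgroup of the discriminant group with respect to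
the discriminant form. -/
def discOrth (B : V →ₗ[ℚ] V →ₗ[ℚ] ℚ) (L : Submodule ℤ V) (halt : ∀ v, B v v = 0)
    (D' : Submodule ℤ (DiscGroup B L)) : Submodule ℤ (DiscGroup B L) :=
  ⨅ y ∈ D', LinearMap.ker ((discForm B L halt).flip y)

/-- A splitting element of the discriminant group: `x` of order `d` lies in a subgroup
`D' ≅ (ℤ/d)²` with `D_Λ = D' ⊕ D'^⊥`. -/
def IsSplitElem (B : V →ₗ[ℚ] V →ₗ[ℚ] ℚ) (L : Submodule ℤ V) (halt : ∀ v, B v v = 0)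
    (x : DiscGroup B L) : Prop :=
  ∃ D' : Submodule ℤ (DiscGroup B L), x ∈ D' ∧
    Nonempty (D' ≃+ (ZMod (addOrderOf x) × ZMod (addOrderOf x))) ∧
    D' ⊔ discOrth B L halt D' = ⊤ ∧ D' ⊓ discOrth B L halt D' = ⊥

/-- The orthogonal complement `Λ₁^⊥ = {z ∈ Λ : (z, Λ₁) = 0}` of a sublattice inside `L`. -/
def orthCompIn (B : V →ₗ[ℚ] V →ₗ[ℚ] ℚ) (L L₁ : Submodule ℤ V) : Submodule ℤ V where
  carrier := {z | z ∈ L ∧ ∀ y ∈ L₁, B z y = 0}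
  zero_mem' := ⟨L.zero_mem, fun y _ => by simp⟩
  add_mem' := by
    intro a b ha hb
    refine ⟨L.add_mem ha.1 hb.1, fun y hy => ?_⟩
    rw [map_add, LinearMap.add_apply, ha.2 y hy, hb.2 y hy, add_zero]
  smul_mem' := by
    intro c a ha
    refine ⟨L.smul_mem c ha.1, fun y hy => ?_⟩
    have h1 : B (c • a) y = (B.flip y) (c • a) := rfl
    rw [h1, map_zsmul, LinearMap.flip_apply, ha.2 y hy, smul_zero]

/-- A splitting (primitive) vector: `v` lies in a rank 2 sublattice `Λ₁` with
`Λ = Λ₁ ⊕ Λ₁^⊥` (orthogonal direct sum). -/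
def IsSplitVec (B : V →ₗ[ℚ] V →ₗ[ℚ] ℚ) (L : Submodule ℤ V) (v : V) : Prop :=
  ∃ L₁ : Submodule ℤ V, v ∈ L₁ ∧ L₁ ≤ L ∧ Module.finrank ℤ L₁ = 2 ∧
    L₁ ⊔ orthCompIn B L L₁ = L ∧ L₁ ⊓ orthCompIn B L L₁ = ⊥

end

/-!
Let `e, f` be a hyperbolic pair in `Λ`, so that `(v, f)` and `(e, v)` are the coordinates of `v`
along `e` and `f`. The symplectic transvections `x ↦ x + c (u, x) u` with `u ∈ Λ` and `c ∈ ℤ` lie in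
`Γ_Λ`. Those along `e` and `f` run the Euclidean algorithm on the pair `((v, f), (e, v))`, and with
their help every vector `v` of divisibility `d` can be moved to one with `(v, f) = d`. If `v` and
`w` are so normalised and `m = v* - w* ∈ Λ`, then `m ⟂ f`, and the transvection `T_{f,m}` carries
`v = w + d m` to `w` up to a transvection along `f`. Since the class of `v*` has order `d` when `v`
is primitive, it determines `d`. Conversely, every class has a representative `u ∈ Λ^∨` with
`(u, f) = 1`, and if the class has order `d` then `d u` is primitive of divisibility `d`.
-/

open MulAction Submodule

section SymplecticTransvection

variable {R M : Type*} [CommRing R] [AddCommGroup M] [Module R M] {B : M →ₗ[R] M →ₗ[R] R}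

/-- The symplectic transvection `x ↦ x + c (u, x) u` of an alternating form. It is the rank one
counterpart of `transvection B l m`, which is a product of three of these. -/
def symplecticTransvection (hB : B.IsAlt) (c : R) (u : M) : M ≃ₗ[R] M :=
  LinearEquiv.transvection (f := c • B u) (v := u) (by simp [hB.self_eq_zero])

lemma symplecticTransvection_apply (hB : B.IsAlt) (c : R) (u x : M) :
    symplecticTransvection hB c u x = x + (c * B u x) • u :=
  rfl

lemma form_symplecticTransvection (hB : B.IsAlt) (c : R) (u x y : M) :
    B (symplecticTransvection hB c u x) (symplecticTransvection hB c u y) = B x y := by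
  simp only [symplecticTransvection_apply, map_add, map_smul, LinearMap.add_apply,
    LinearMap.smul_apply, smul_eq_mul, hB.self_eq_zero, ← hB.neg u x]
  ring

end SymplecticTransvection

section RationalSpan

variable {V : Type*} [AddCommGroup V] [Module ℚ V] {L : Submodule ℤ V}

lemma intCast_smul_mem {x : V} (hx : x ∈ L) (n : ℤ) : (n : ℚ) • x ∈ L := by
  rw [Int.cast_smul_eq_zsmul]
  exact L.smul_mem n hx

lemma isOfFinAddOrder_mkQ_of_mem_span {x : V} (hx : x ∈ span ℚ (L : Set V)) :
    IsOfFinAddOrder (L.mkQ x) := by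
  obtain ⟨y, hy, n, rfl⟩ := (IsLocalization.mem_span_iff (nonZeroDivisors ℤ)).1 hx
  rw [span_eq] at hy
  refine isOfFinAddOrder_iff_zsmul_eq_zero.2 ⟨n, nonZeroDivisors.coe_ne_zero n, ?_⟩
  have hn : (n : ℤ) • IsLocalization.mk' ℚ 1 n • y = y := by
    rw [← smul_assoc, IsLocalization.smul_mk'_self, map_one, one_smul]
  rwa [← map_zsmul, hn, mkQ_apply, Quotient.mk_eq_zero]

end RationalSpan

variable {V : Type} [AddCommGroup V] [Module ℚ V]
  {B : V →ₗ[ℚ] V →ₗ[ℚ] ℚ} {L : Submodule ℤ V} {d : ℕ} {e f v w : V}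

section Divisibility

lemma natCast_smul_vstar (hd : d ≠ 0) (v : V) : (d : ℚ) • vstar v d = v :=
  smul_inv_smul₀ (Nat.cast_ne_zero.2 hd) v

lemma vstar_natCast_smul (hd : d ≠ 0) (v : V) : vstar ((d : ℚ) • v) d = v :=
  inv_smul_smul₀ (Nat.cast_ne_zero.2 hd) v

lemma HasDiv.ne_zero (h : HasDiv B L v d) : v ≠ 0 := by
  rintro rfl
  obtain ⟨x, -, hx⟩ := h.2.2
  exact h.1.ne' (by simpa [eq_comm] using hx)

lemma HasDiv.dvd {d' : ℕ} (h : HasDiv B L v d) (h' : HasDiv B L v d') : d ∣ d' := by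
  obtain ⟨x, hx, hxd'⟩ := h'.2.2
  obtain ⟨n, hn⟩ := h.2.1 x hx
  have hd' : (d' : ℤ) = n * d := by exact_mod_cast hxd'.symm.trans hn
  exact Int.natCast_dvd_natCast.1 ⟨n, by rw [hd', mul_comm]⟩

lemma HasDiv.unique {d' : ℕ} (h : HasDiv B L v d) (h' : HasDiv B L v d') : d = d' :=
  Nat.dvd_antisymm (h.dvd h') (h'.dvd h)

lemma HasDiv.map {γ : V ≃ₗ[ℚ] V} (hγ : IsIsometry B L γ) (h : HasDiv B L v d) :
    HasDiv B L (γ v) d := by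
  obtain ⟨hd, hdvd, x, hx, hxd⟩ := h
  refine ⟨hd, fun y hy => ?_, γ x, (hγ.1 x).1 hx, by rw [hγ.2, hxd]⟩
  obtain ⟨n, hn⟩ := hdvd (γ.symm y) ((hγ.1 _).2 (by rwa [γ.apply_symm_apply]))
  exact ⟨n, by rw [← hn, ← hγ.2 v (γ.symm y), γ.apply_symm_apply]⟩

lemma IsPrimitive.natCast_smul_vstar_mem_iff (hv : IsPrimitive L v) (hv0 : v ≠ 0) (hd : d ≠ 0)
    {n : ℕ} : (n : ℚ) • vstar v d ∈ L ↔ d ∣ n := by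
  have hd' : (d : ℚ) ≠ 0 := Nat.cast_ne_zero.2 hd
  constructor
  · intro hn
    have hmem : (n : ℚ) • vstar v d ∈ (span ℚ {v}).restrictScalars ℤ ⊓ L :=
      ⟨mem_span_singleton.2 ⟨n * (d : ℚ)⁻¹, by rw [vstar, smul_smul]⟩, hn⟩
    rw [hv.2, mem_span_singleton] at hmem
    obtain ⟨k, hk⟩ := hmem
    rw [← Int.cast_smul_eq_zsmul ℚ, vstar, smul_smul] at hk
    have hkn : (k : ℚ) = n * (d : ℚ)⁻¹ := smul_left_injective ℚ hv0 hk
    have hnk : (n : ℤ) = k * d := by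
      field_simp at hkn
      exact_mod_cast hkn.symm
    exact Int.natCast_dvd_natCast.1 (Dvd.intro_left k hnk.symm)
  · rintro ⟨k, rfl⟩
    rw [mul_comm, Nat.cast_mul, mul_smul, natCast_smul_vstar hd]
    exact_mod_cast intCast_smul_mem hv.1 k

lemma IsPrimitive.addOrderOf_mkQ_vstar (hv : IsPrimitive L v) (hv0 : v ≠ 0) (hd : d ≠ 0) :
    addOrderOf (L.mkQ (vstar v d)) = d := by
  refine Nat.dvd_right_iff_eq.1 fun n => ?_
  rw [addOrderOf_dvd_iff_nsmul_eq_zero, ← map_nsmul, mkQ_apply, Quotient.mk_eq_zero,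
    ← Nat.cast_smul_eq_nsmul ℚ, hv.natCast_smul_vstar_mem_iff hv0 hd]

end Divisibility

section DiscriminantKernel

lemma isIsometry_symm {γ : V ≃ₗ[ℚ] V} (h : IsIsometry B L γ) : IsIsometry B L γ.symm := by
  refine ⟨fun v => ?_, fun v w => ?_⟩
  · rw [h.1 (γ.symm v), γ.apply_symm_apply]
  · rw [← h.2, γ.apply_symm_apply, γ.apply_symm_apply]

/-- The group `Γ_Λ`, as a group of automorphisms of the rational space `Λ ⊗ ℚ`. -/
def discKernel (B : V →ₗ[ℚ] V →ₗ[ℚ] ℚ) (L : Submodule ℤ V) : Subgroup (V ≃ₗ[ℚ] V) where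
  carrier := {γ | InGamma B L γ}
  one_mem' := ⟨⟨fun _ => Iff.rfl, fun _ _ => rfl⟩, fun v _ => by simp⟩
  mul_mem' := by
    rintro γ δ ⟨hγ, hγ'⟩ ⟨hδ, hδ'⟩
    refine ⟨⟨fun v => (hδ.1 v).trans (hγ.1 _), fun v w => (hγ.2 _ _).trans (hδ.2 v w)⟩,
      fun v hv => ?_⟩
    rw [← sub_add_sub_cancel _ (δ v) v]
    exact L.add_mem (hγ' _ (isometry_dual_mem hδ hv)) (hδ' v hv)
  inv_mem' := by
    rintro γ ⟨hγ, hγ'⟩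
    have hγs := isIsometry_symm hγ
    refine ⟨hγs, fun v hv => ?_⟩
    have h := hγ' _ (isometry_dual_mem hγs hv)
    rw [γ.apply_symm_apply] at h
    exact (sub_mem_comm_iff (H := L)).1 h

lemma orbit_discKernel_eq_iff :
    orbit (discKernel B L) v = orbit (discKernel B L) w ↔
      ∃ γ : V ≃ₗ[ℚ] V, InGamma B L γ ∧ γ v = w := by
  rw [eq_comm, orbit_eq_iff, mem_orbit_iff]
  exact ⟨fun ⟨γ, h⟩ => ⟨γ, γ.2, h⟩, fun ⟨γ, hγ, h⟩ => ⟨⟨γ, hγ⟩, h⟩⟩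

lemma orbit_discKernel_apply {γ : V ≃ₗ[ℚ] V} (hγ : γ ∈ discKernel B L) (v : V) :
    orbit (discKernel B L) (γ v) = orbit (discKernel B L) v :=
  orbit_smul (⟨γ, hγ⟩ : discKernel B L) v

lemma HasDiv.of_orbit_eq (h : HasDiv B L v d)
    (hvw : orbit (discKernel B L) v = orbit (discKernel B L) w) : HasDiv B L w d := by
  obtain ⟨γ, hγ, rfl⟩ := orbit_discKernel_eq_iff.1 hvw
  exact h.map hγ.1

lemma vstar_sub_vstar_mem_of_orbit_eq {dv dw : ℕ} (hv : HasDiv B L v dv) (hw : HasDiv B L w dw)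
    (hvw : orbit (discKernel B L) v = orbit (discKernel B L) w) :
    vstar v dv - vstar w dw ∈ L := by
  obtain rfl := (hv.of_orbit_eq hvw).unique hw
  obtain ⟨γ, hγ, rfl⟩ := orbit_discKernel_eq_iff.1 hvw
  have h := hγ.2 _ (vstar_mem hv)
  rw [vstar, map_smul] at h
  exact (sub_mem_comm_iff (H := L)).1 h

lemma discCls_eq_iff (x y : dualLattice B L) :
    discCls B L x = discCls B L y ↔ (x : V) - y ∈ L :=
  Submodule.Quotient.eq _

end DiscriminantKernel

section Orbits

lemma exists_intCast_eq_of_mem_dualLattice (hB : B.IsAlt) {u x : V} (hu : u ∈ L)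
    (hx : x ∈ dualLattice B L) : ∃ n : ℤ, B u x = n := by
  obtain ⟨n, hn⟩ := hx u hu
  exact ⟨-n, by rw [← hB.neg x u, hn, Int.cast_neg]⟩

lemma symplecticTransvection_mem_discKernel (hB : B.IsAlt) (hL : L ≤ dualLattice B L) {u : V}
    (hu : u ∈ L) (c : ℤ) : symplecticTransvection hB (c : ℚ) u ∈ discKernel B L := by
  have hmem : ∀ x ∈ dualLattice B L, (c * B u x : ℚ) • u ∈ L := fun x hx => by
    obtain ⟨n, hn⟩ := exists_intCast_eq_of_mem_dualLattice hB hu hx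
    rw [hn, ← Int.cast_mul]
    exact intCast_smul_mem hu _
  refine ⟨⟨fun x => ⟨fun hx => L.add_mem hx (hmem x (hL hx)), fun hx => ?_⟩,
    form_symplecticTransvection hB _ u⟩, fun x hx => ?_⟩
  · have h := hmem _ (hL hx)
    rw [symplecticTransvection_apply] at h hx
    simp only [map_add, map_smul, hB.self_eq_zero, smul_zero, add_zero] at h
    exact (L.add_mem_iff_left h).1 hx
  · rw [symplecticTransvection_apply, add_sub_cancel_left]
    exact hmem x hx

lemma orbit_symplecticTransvection (hB : B.IsAlt) (hL : L ≤ dualLattice B L) {u : V}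
    (hu : u ∈ L) (c : ℤ) (v : V) :
    orbit (discKernel B L) (v + (c * B u v : ℚ) • u) = orbit (discKernel B L) v :=
  orbit_discKernel_apply (symplecticTransvection_mem_discKernel hB hL hu c) v

lemma orbit_transvection (hB : B.IsAlt) (hL : L ≤ dualLattice B L) {l m : V} (hl : l ∈ L)
    (hm : m ∈ L) (hlm : B l m = 0) (v : V) :
    orbit (discKernel B L) (transvection B l m v) = orbit (discKernel B L) v := by
  have hml : B m l = 0 := hB.eq_iff.1 hlm
  rw [← orbit_symplecticTransvection hB hL hl (-1) v,
    ← orbit_symplecticTransvection hB hL hm (-1) (v + _),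
    ← orbit_symplecticTransvection hB hL (L.add_mem hl hm) 1 (v + _ + _)]
  congr 1
  simp only [transvection, LinearMap.add_apply, LinearMap.id_apply, LinearMap.smulRight_apply,
    map_add, map_smul, hB.self_eq_zero, hlm, hml, smul_eq_mul]
  push_cast
  module

lemma exists_orbit_eq_rotate (hB : B.IsAlt) (hL : L ≤ dualLattice B L) (he : e ∈ L) (hf : f ∈ L)
    (hef : B e f = 1) (v : V) :
    ∃ w, orbit (discKernel B L) w = orbit (discKernel B L) v ∧
      B w f = B e v ∧ B e w = -B v f := by
  have hfv : B f v = -B v f := (hB.neg v f).symm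
  have hfe : B f e = -1 := by rw [← hB.neg e f, hef]
  have hshear : ∀ {u}, u ∈ L → ∀ x,
      orbit (discKernel B L) (x + B u x • u) = orbit (discKernel B L) x := fun hu x => by
    simpa using orbit_symplecticTransvection hB hL hu 1 x
  refine ⟨_, (hshear he _).trans ((hshear hf _).trans (hshear he v)), ?_, ?_⟩ <;>
  · simp only [map_add, map_smul, LinearMap.add_apply, LinearMap.smul_apply, smul_eq_mul,
      hB.self_eq_zero, hef, hfe, hfv]
    ring

lemma exists_orbit_eq_gcd (hB : B.IsAlt) (hL : L ≤ dualLattice B L) (he : e ∈ L) (hf : f ∈ L)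
    (hef : B e f = 1) {a b : ℤ} (ha : B v f = a) (hb : B e v = b) :
    ∃ w, orbit (discKernel B L) w = orbit (discKernel B L) v ∧ B w f = a.gcd b ∧ B e w = 0 := by
  induction hk : b.natAbs using Nat.strong_induction_on generalizing a b v with
  | _ k ih =>
    obtain rfl | hb0 := eq_or_ne b 0
    · rcases le_total 0 a with h0 | h0
      · exact ⟨v, rfl, by simp [ha, abs_of_nonneg, h0], by simpa using hb⟩
      · obtain ⟨v₁, hv₁, hv₁f, hev₁⟩ := exists_orbit_eq_rotate hB hL he hf hef v
        obtain ⟨v₂, hv₂, hv₂f, hev₂⟩ := exists_orbit_eq_rotate hB hL he hf hef v₁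
        refine ⟨v₂, hv₂.trans hv₁, ?_, by simp [hev₂, hv₁f, hb]⟩
        simp [hv₂f, hev₁, ha, abs_of_nonpos, h0]
    · have hred := orbit_symplecticTransvection hB hL he (-(a / b)) v
      set v₁ := v + (((-(a / b) : ℤ) : ℚ) * B e v) • e with hv₁
      have hv₁f : B v₁ f = (a % b : ℤ) := by
        simp only [hv₁, map_add, map_smul, LinearMap.add_apply, LinearMap.smul_apply, smul_eq_mul,
          ha, hb, hef, Int.emod_def]
        push_cast
        ring
      have hev₁ : B e v₁ = b := by simp [hv₁, hB.self_eq_zero, hb]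
      obtain ⟨v₂, hv₂, hv₂f, hev₂⟩ := exists_orbit_eq_rotate hB hL he hf hef v₁
      have hlt : (-(a % b)).natAbs < k := by
        have := Int.emod_nonneg a hb0
        have := Int.emod_lt_abs a hb0
        rw [Int.abs_eq_natAbs] at this
        omega
      obtain ⟨w, hw, hwf, hew⟩ := ih _ hlt (hv₂f.trans hev₁)
        (by rw [hev₂, hv₁f, Int.cast_neg]) rfl
      refine ⟨w, hw.trans (hv₂.trans hred), ?_, hew⟩
      rw [hwf, Int.gcd_neg, Int.gcd_comm, Int.emod_def, sub_eq_add_neg, ← mul_neg,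
        Int.gcd_add_mul_left_left]

lemma exists_orbit_eq_form_eq_div (hB : B.IsAlt) (hL : L ≤ dualLattice B L) (he : e ∈ L)
    (hf : f ∈ L) (hef : B e f = 1) (hd : HasDiv B L v d) :
    ∃ w, orbit (discKernel B L) w = orbit (discKernel B L) v ∧ B w f = d := by
  obtain ⟨a, ha⟩ := hd.2.1 f hf
  obtain ⟨b, hb⟩ := hd.2.1 e he
  obtain ⟨v₁, hv₁, hv₁f, hev₁⟩ := exists_orbit_eq_gcd hB hL he hf hef (v := v) (a := a * d)
    (b := -(b * d)) (by rw [ha]; push_cast; rfl) (by rw [← hB.neg v e, hb]; push_cast; rfl)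
  set g : ℕ := Int.gcd (a * d) (-(b * d))
  have hdg : d ∣ g := Int.dvd_gcd (dvd_mul_left _ _) ((dvd_mul_left _ _).neg_right)
  obtain ⟨x, hx, hxd⟩ := (hd.of_orbit_eq hv₁.symm).2.2
  obtain ⟨t, ht⟩ := hL hf x hx
  set m := x + (t : ℚ) • e with hm
  have hmL : m ∈ L := L.add_mem hx (intCast_smul_mem he t)
  have hfm : B f m = 0 := by rw [hm, map_add, map_smul, ht, ← hB.neg e f, hef]; simp
  have hmv₁ : B m v₁ = -d := by simp [hm, hev₁, ← hB.neg v₁ x, hxd]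
  obtain ⟨s, hs⟩ := hL he m hmL
  have hTf : B (transvection B f m v₁) f = g := by
    simp [transvection, hv₁f, hB.eq_iff.1 hfm, hB.self_eq_zero]
  have heT : B e (transvection B f m v₁) = (-d + g * (-s) : ℤ) := by
    simp only [transvection, LinearMap.add_apply, LinearMap.id_coe, id_eq,
      LinearMap.coe_smulRight, ← hB.neg v₁ f, hv₁f, neg_smul, hmv₁, map_add, hev₁, map_neg,
      map_smul, hs, smul_eq_mul, hef]
    push_cast
    ring
  obtain ⟨w, hw, hwf, -⟩ := exists_orbit_eq_gcd hB hL he hf hef (a := g) hTf heT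
  refine ⟨w, hw.trans ((orbit_transvection hB hL hf hmL hfm v₁).trans hv₁), ?_⟩
  rw [hwf, Int.gcd_add_mul_left_right, Int.gcd_neg, Int.gcd_natCast_natCast,
    Nat.gcd_eq_right hdg]

lemma orbit_eq_of_form_eq_div (hB : B.IsAlt) (hL : L ≤ dualLattice B L) (hf : f ∈ L)
    (hd : HasDiv B L v d) (hvf : B v f = d) (hwf : B w f = d)
    (hvw : vstar v d - vstar w d ∈ L) :
    orbit (discKernel B L) v = orbit (discKernel B L) w := by
  set m := vstar v d - vstar w d with hm
  have hfm : B f m = 0 := hB.eq_iff.1 (by simp [hm, vstar, hvf, hwf])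
  have hdm : (d : ℚ) • m = v - w := by
    rw [hm, smul_sub, natCast_smul_vstar hd.1.ne', natCast_smul_vstar hd.1.ne']
  obtain ⟨n, hn⟩ := hd.2.1 m hvw
  rw [← orbit_transvection hB hL hf hvw hfm v, ← orbit_symplecticTransvection hB hL hf n w]
  congr 1
  simp only [transvection, LinearMap.add_apply, LinearMap.id_apply, LinearMap.smulRight_apply,
    ← hB.neg v f, ← hB.neg w f, ← hB.neg v m, hvf, hwf, hn, neg_smul, hdm]
  module

lemma orbit_eq_of_vstar_sub_vstar_mem (hB : B.IsAlt) (hL : L ≤ dualLattice B L) (he : e ∈ L)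
    (hf : f ∈ L) (hef : B e f = 1) {dv dw : ℕ} (hv : IsPrimitive L v) (hw : IsPrimitive L w)
    (hdv : HasDiv B L v dv) (hdw : HasDiv B L w dw) (hvw : vstar v dv - vstar w dw ∈ L) :
    orbit (discKernel B L) v = orbit (discKernel B L) w := by
  obtain rfl : dv = dw := by
    rw [← hv.addOrderOf_mkQ_vstar hdv.ne_zero hdv.1.ne',
      ← hw.addOrderOf_mkQ_vstar hdw.ne_zero hdw.1.ne', mkQ_apply, mkQ_apply,
      (Submodule.Quotient.eq L).2 hvw]
  obtain ⟨v', hv', hv'f⟩ := exists_orbit_eq_form_eq_div hB hL he hf hef hdv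
  obtain ⟨w', hw', hw'f⟩ := exists_orbit_eq_form_eq_div hB hL he hf hef hdw
  have hdv' := hdv.of_orbit_eq hv'.symm
  have hdw' := hdw.of_orbit_eq hw'.symm
  have hv'w' : vstar v' dv - vstar w' dv ∈ L := by
    have hv'v := vstar_sub_vstar_mem_of_orbit_eq hdv' hdv hv'
    have hww' := vstar_sub_vstar_mem_of_orbit_eq hdw hdw' hw'.symm
    simpa using L.add_mem (L.add_mem hv'v hvw) hww'
  exact hv'.symm.trans ((orbit_eq_of_form_eq_div hB hL hf hdv' hv'f hw'f hv'w').trans hw')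

end Orbits

section Representatives

variable {u : V}

lemma isPrimitive_addOrderOf_smul (hL : L ≤ dualLattice B L) (hf : f ∈ L) (huf : B u f = 1) :
    IsPrimitive L ((addOrderOf (L.mkQ u) : ℚ) • u) := by
  set d := addOrderOf (L.mkQ u)
  have hmem_iff (n : ℤ) : (n : ℚ) • u ∈ L ↔ (d : ℤ) ∣ n := by
    rw [addOrderOf_dvd_iff_zsmul_eq_zero, ← map_zsmul, mkQ_apply, Quotient.mk_eq_zero,
      Int.cast_smul_eq_zsmul]
  have hdu : (d : ℚ) • u ∈ L := by exact_mod_cast (hmem_iff d).2 dvd_rfl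
  refine ⟨hdu, le_antisymm ?_ ?_⟩
  · rintro x ⟨hx, hxL⟩
    obtain ⟨q, rfl⟩ := mem_span_singleton.1 hx
    obtain ⟨n, hn⟩ := hL hxL f hf
    have hqd : q * d = n := by simpa [huf] using hn
    rw [SetLike.mem_coe, smul_smul, hqd, hmem_iff] at hxL
    obtain ⟨k, rfl⟩ := hxL
    refine mem_span_singleton.2 ⟨k, ?_⟩
    rw [smul_smul, hqd, ← Int.cast_smul_eq_zsmul ℚ, smul_smul]
    push_cast
    rw [mul_comm]
  · rw [span_singleton_le_iff_mem]
    exact ⟨mem_span_singleton_self _, hdu⟩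

lemma hasDiv_natCast_smul (hu : u ∈ dualLattice B L) (hf : f ∈ L) (huf : B u f = 1) (hd : 0 < d) :
    HasDiv B L ((d : ℚ) • u) d := by
  refine ⟨hd, fun x hx => ?_, f, hf, by simp [huf]⟩
  obtain ⟨n, hn⟩ := hu x hx
  exact ⟨n, by simp [hn, mul_comm]⟩

lemma exists_isPrimitive_vstar_sub_mem (hL : L ≤ dualLattice B L) (he : e ∈ L) (hf : f ∈ L)
    (hef : B e f = 1) (hu : u ∈ dualLattice B L) (huL : u ∈ span ℚ (L : Set V)) :
    ∃ (v : V) (d : ℕ), IsPrimitive L v ∧ HasDiv B L v d ∧ vstar v d - u ∈ L := by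
  obtain ⟨b, hb⟩ := hu f hf
  have hceL := intCast_smul_mem he (1 - b)
  set u' := u + ((1 - b : ℤ) : ℚ) • e with hu'
  have hu'f : B u' f = 1 := by simp [hu', hb, hef]
  have hfin : IsOfFinAddOrder (L.mkQ u') :=
    isOfFinAddOrder_mkQ_of_mem_span (add_mem huL (subset_span hceL))
  refine ⟨_, _, isPrimitive_addOrderOf_smul hL hf hu'f,
    hasDiv_natCast_smul (add_mem hu (hL hceL)) hf hu'f hfin.addOrderOf_pos, ?_⟩
  rwa [vstar_natCast_smul hfin.addOrderOf_pos.ne', hu', add_sub_cancel_left]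

end Representatives

theorem eichler_criterion_type_one_p_p_general (hB : B.IsAlt) (hL : L ≤ dualLattice B L)
    (hspan : span ℚ (L : Set V) = ⊤) (he : e ∈ L) (hf : f ∈ L) (hef : B e f = 1) :
    (∀ (v w : V) (dv dw : ℕ) (_ : IsPrimitive L v) (_ : IsPrimitive L w)
        (hdv : HasDiv B L v dv) (hdw : HasDiv B L w dw),
        (∃ γ : V ≃ₗ[ℚ] V, InGamma B L γ ∧ γ v = w) ↔
          discCls B L ⟨vstar v dv, vstar_mem hdv⟩ =
            discCls B L ⟨vstar w dw, vstar_mem hdw⟩) ∧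
    (∀ x : DiscGroup B L, ∃ (v : V) (d : ℕ) (_ : IsPrimitive L v) (hd : HasDiv B L v d),
        discCls B L ⟨vstar v d, vstar_mem hd⟩ = x) := by
  refine ⟨fun v w dv dw hv hw hdv hdw => ?_, fun x => ?_⟩
  · rw [← orbit_discKernel_eq_iff, discCls_eq_iff]
    exact ⟨vstar_sub_vstar_mem_of_orbit_eq hdv hdw,
      orbit_eq_of_vstar_sub_vstar_mem hB hL he hf hef hv hw hdv hdw⟩
  · obtain ⟨u, rfl⟩ := Submodule.Quotient.mk_surjective _ x
    obtain ⟨v, d, hv, hd, hvu⟩ :=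
      exists_isPrimitive_vstar_sub_mem hL he hf hef u.2 (hspan ▸ mem_top)
    exact ⟨v, d, hv, hd, (discCls_eq_iff _ u).2 hvu⟩

/-- **Type `(1, p, …, p)`.** For `Λ = U ⊕ U(p) ⊕ ⋯ ⊕ U(p)` with `p` prime, the map
`v ↦ [v*]` induces a bijection from `Γ_Λ`-classes of primitive vectors onto `D_Λ`. -/
theorem eichler_criterion_type_one_p_p
    (V : Type) [AddCommGroup V] [Module ℚ V]
    (B : V →ₗ[ℚ] V →ₗ[ℚ] ℚ)
    (halt : ∀ v, B v v = 0)
    (hnd : ∀ v : V, (∀ w, B v w = 0) → v = 0)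
    (L : Submodule ℤ V) (hfg : L.FG)
    (hspan : Submodule.span ℚ (L : Set V) = ⊤)
    (hint : ∀ x ∈ L, ∀ y ∈ L, ∃ n : ℤ, B x y = (n : ℚ))
    (p : ℕ) (hp : p.Prime) (ι : Type) [Fintype ι]
    (e f : V) (E F : ι → V)
    (hdec : OrthoDecompUUp B L p e f E F) :
    (∀ (v w : V) (dv dw : ℕ) (hv : IsPrimitive L v) (hw : IsPrimitive L w)
        (hdv : HasDiv B L v dv) (hdw : HasDiv B L w dw),
        (∃ γ : V ≃ₗ[ℚ] V, InGamma B L γ ∧ γ v = w) ↔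
          discCls B L ⟨vstar v dv, vstar_mem hdv⟩ =
            discCls B L ⟨vstar w dw, vstar_mem hdw⟩) ∧
    (∀ x : DiscGroup B L, ∃ (v : V) (d : ℕ) (hv : IsPrimitive L v) (hd : HasDiv B L v d),
        discCls B L ⟨vstar v d, vstar_mem hd⟩ = x) := by
  obtain ⟨he, hf, -, -, hef, -⟩ := hdec
  exact eichler_criterion_type_one_p_p_general halt (fun x hx => hint x hx) hspan he hf hef
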